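/- ∑_{n=0}^∞ ((20n² − 4n − 1)·n²·(2n+1)/(2n−1)) · (−1)^n · C(2n,n)⁵ / 2^{12n} = −2/π², where the n = 0 term is interpreted via the factor n² (so it vanishes is false: at n=0 the term equals ((−1)(0)(1)/(−1))·1 = 0), i.e., the series starts effectively at n = 1 with value −2/π². -/

import Mathlib

/-!
The series is reduced to Guillera's `∑ (20n² + 8n + 1) tₙ = 8/π²`, where
`tₙ = (-1)ⁿ C(2n,n)⁵ / 2¹²ⁿ`: with `Zₙ = -32 n⁵/(2n-1) tₙ` the summand equals
`Zₙ₊₁ - Zₙ - (20n² + 8n + 1) tₙ / 4` (`summand_eq`), and `Z` vanishes at `0` and at infinity.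

Guillera's series is evaluated with a Wilf–Zeilberger pair `wzF`, `wzG` satisfying
`F(n+1,k) - F(n,k) = G(n,k+1) - G(n,k)` (`wz`), obtained from Dougall's `₅F₄` summation with
parameters `a = b = c = 1/2`, `d = 1/2 - n` and summation index shifted by `n`. Here
`G(n,0) = (20n² + 8n + 1) tₙ`, while `F(0,k) = 0` and `F(n,k) → 0` as `n → ∞`, so that
`∑ₙ G(n,k)` does not depend on `k`. As `k → ∞` the terms with `n ≥ 1` are dominated by
`40 (n+1)² 3¹⁻ⁿ` times a null sequence (`abs_wzG_succ_le`), and the remaining term `G(0,k)` tends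
to `8/π²` by Wallis' product.
-/

open Filter Topology

/-! ### Normalized central binomial coefficients -/

/-- The normalized central binomial coefficient `C(2n,n) / 4ⁿ = (1/2)ₙ / n!`. -/
noncomputable def ncb (n : ℕ) : ℝ := (Nat.centralBinom n : ℝ) / 4 ^ n

lemma ncb_zero : ncb 0 = 1 := by simp [ncb]

lemma ncb_pos (n : ℕ) : 0 < ncb n := by
  have := Nat.centralBinom_pos n
  unfold ncb
  positivity

lemma ncb_succ (n : ℕ) : ncb (n + 1) = ncb n * ((2 * n + 1) / (2 * n + 2)) := by
  have h : ((n : ℝ) + 1) * (Nat.centralBinom (n + 1) : ℝ)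
      = 2 * (2 * n + 1) * (Nat.centralBinom n : ℝ) := by
    exact_mod_cast Nat.succ_mul_centralBinom_succ n
  have hn : (n : ℝ) + 1 ≠ 0 := by positivity
  have h' : (Nat.centralBinom (n + 1) : ℝ)
      = 2 * (2 * n + 1) * (Nat.centralBinom n : ℝ) / (n + 1) := by
    rw [eq_div_iff hn]; linarith
  unfold ncb
  rw [h', pow_succ]
  field_simp
  ring

lemma ncb_le_one (n : ℕ) : ncb n ≤ 1 := by
  induction n with
  | zero => rw [ncb_zero]
  | succ n ih =>
    rw [ncb_succ]
    refine mul_le_one₀ ih (by positivity) ?_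
    rw [div_le_one (by positivity)]
    linarith

lemma ncb_sq_mul (n : ℕ) : ncb n ^ 2 * (2 * n + 1) = (Real.Wallis.W n)⁻¹ := by
  apply eq_inv_of_mul_eq_one_left
  induction n with
  | zero => simp [ncb_zero, Real.Wallis.W]
  | succ n ih =>
    rw [Real.Wallis.W_succ, ncb_succ]
    refine Eq.trans ?_ ih
    push_cast
    field_simp
    ring

lemma tendsto_ncb_sq_mul :
    Tendsto (fun n : ℕ => ncb n ^ 2 * (2 * n + 1)) atTop (𝓝 (2 / Real.pi)) := by
  simp_rw [ncb_sq_mul]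
  have := Real.Wallis.tendsto_W_nhds_pi_div_two.inv₀ (by positivity)
  rwa [inv_div] at this

lemma tendsto_ncb : Tendsto ncb atTop (𝓝 0) := by
  have h1 : Tendsto (fun n : ℕ => (2 * (n : ℝ) + 1)) atTop atTop :=
    tendsto_atTop_add_const_right _ _
      (tendsto_natCast_atTop_atTop.const_mul_atTop (by norm_num))
  have h := (tendsto_ncb_sq_mul.div_atTop h1).sqrt
  rw [Real.sqrt_zero] at h
  refine h.congr fun n => ?_
  rw [mul_div_cancel_right₀ _ (by positivity), Real.sqrt_sq (ncb_pos n).le]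

/-! ### Reciprocal multinomial coefficients -/

/-- The reciprocal multinomial coefficient `n! n! k! / (2n+k)!`. -/
noncomputable def rmult (n k : ℕ) : ℝ :=
  (n.factorial : ℝ) ^ 2 * k.factorial / (2 * n + k).factorial

lemma rmult_pos (n k : ℕ) : 0 < rmult n k := by
  unfold rmult
  positivity

lemma rmult_succ_left (n k : ℕ) :
    rmult (n + 1) k = rmult n k * ((n + 1) ^ 2 / ((2 * n + k + 1) * (2 * n + k + 2))) := by
  unfold rmult
  rw [show 2 * (n + 1) + k = (2 * n + k + 1) + 1 by ring, Nat.factorial_succ, Nat.factorial_succ,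
    Nat.factorial_succ]
  push_cast
  field_simp
  ring

lemma rmult_succ_right (n k : ℕ) :
    rmult n (k + 1) = rmult n k * ((k + 1) / (2 * n + k + 1)) := by
  unfold rmult
  rw [show 2 * n + (k + 1) = (2 * n + k) + 1 by ring, Nat.factorial_succ, Nat.factorial_succ]
  push_cast
  field_simp

lemma rmult_zero_left (k : ℕ) : rmult 0 k = 1 := by
  unfold rmult
  simp [Nat.factorial_ne_zero]

lemma rmult_zero_right (n : ℕ) : rmult n 0 * Nat.centralBinom n = 1 := by
  have h : (Nat.centralBinom n : ℝ) * n.factorial * n.factorial = (2 * n).factorial := by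
    have := Nat.choose_mul_factorial_mul_factorial (show n ≤ 2 * n by omega)
    rw [show 2 * n - n = n by omega] at this
    exact_mod_cast this
  unfold rmult
  rw [add_zero, ← h]
  have := Nat.centralBinom_pos n
  simp only [Nat.factorial_zero, Nat.cast_one]
  field_simp

/-- The ratio of consecutive values in `n` is at most `1/3` from `n = 1` on, but `1/2` for
`n = k = 0`, hence the shifted index. -/
lemma rmult_le (n k : ℕ) : rmult (n + 1) k ≤ (1 / 3) ^ n / ((k + 1) * (k + 2)) := by
  induction n with
  | zero =>
    rw [rmult_succ_left, rmult_zero_left]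
    simp
  | succ n ih =>
    have h : ((((n + 1 : ℕ) : ℝ) + 1) ^ 2
        / ((2 * ((n + 1 : ℕ) : ℝ) + k + 1) * (2 * ((n + 1 : ℕ) : ℝ) + k + 2))) ≤ 1 / 3 := by
      rw [div_le_div_iff₀ (by positivity) (by norm_num)]
      push_cast
      have hn : (0 : ℝ) ≤ n := n.cast_nonneg
      have hk : (0 : ℝ) ≤ k := k.cast_nonneg
      nlinarith [mul_nonneg hn hk, mul_nonneg hn hn, mul_nonneg hk hk]
    rw [rmult_succ_left]
    calc _ ≤ (1 / 3) ^ n / ((k + 1) * (k + 2)) * (1 / 3 : ℝ) :=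
          mul_le_mul ih h (by positivity) (by positivity)
      _ = _ := by ring

/-! ### The Wilf–Zeilberger pair -/

/-- The common hypergeometric factor
`(-1)ⁿ (1/2)ₙ₊ₖ³ (1/2)ₖ (1/2)ₙ³ / ((n+k)!³ (2n+k)! n!)` of the Wilf–Zeilberger pair. -/
noncomputable def wzB (n k : ℕ) : ℝ :=
  (-1) ^ n * (ncb (n + k) ^ 3 * ncb k * ncb n ^ 3 * rmult n k)

/-- The first member of the Wilf–Zeilberger pair. -/
noncomputable def wzF (n k : ℕ) : ℝ := 4 * n * (4 * n + 4 * k + 1) * wzB n k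

/-- The polynomial part of the second member of the Wilf–Zeilberger pair. -/
noncomputable def wzP (x y : ℝ) : ℝ :=
  40 * x ^ 3 + 36 * x ^ 2 + 10 * x + 1 + y * (72 * x ^ 2 + 44 * x + 6) + y ^ 2 * (40 * x + 12)
    + 8 * y ^ 3

/-- The second member of the Wilf–Zeilberger pair. -/
noncomputable def wzG (n k : ℕ) : ℝ := wzP n k / (2 * n + k + 1) * wzB n k

lemma wz (n k : ℕ) : wzG n (k + 1) - wzG n k = wzF (n + 1) k - wzF n k := by
  unfold wzG wzF wzB wzP
  rw [show n + 1 + k = (n + k) + 1 by ring, show n + (k + 1) = (n + k) + 1 by ring, ncb_succ,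
    ncb_succ, ncb_succ, rmult_succ_left, rmult_succ_right, pow_succ (-1 : ℝ) n]
  push_cast
  field_simp
  ring

lemma abs_wzB_succ_le (n k : ℕ) :
    |wzB (n + 1) k| ≤ ncb k * ((1 / 3) ^ n / ((k + 1) * (k + 2))) := by
  have h1 : ncb (n + 1 + k) ^ 3 ≤ 1 := pow_le_one₀ (ncb_pos _).le (ncb_le_one _)
  have h2 : ncb (n + 1) ^ 3 ≤ 1 := pow_le_one₀ (ncb_pos _).le (ncb_le_one _)
  have p1 := ncb_pos (n + 1 + k)
  have p2 := ncb_pos (n + 1)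
  have p3 := ncb_pos k
  have p4 := rmult_pos (n + 1) k
  unfold wzB
  rw [abs_mul, abs_pow, abs_neg, abs_one, one_pow, one_mul, abs_of_pos (by positivity)]
  calc _ ≤ 1 * ncb k * 1 * ((1 / 3) ^ n / ((k + 1) * (k + 2))) := by
        gcongr
        exact rmult_le n k
    _ = _ := by ring

/-- The bound factors as a null sequence in `k` times a summable sequence in `n`, which gives both
summability in `n` and the vanishing of the terms `n ≥ 1` as `k → ∞`. -/
lemma abs_wzG_succ_le (n k : ℕ) :
    |wzG (n + 1) k| ≤ ncb k * (40 * ((n + 2) ^ 2 * (1 / 3) ^ n)) := by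
  have p3 := ncb_pos k
  have hn : (0 : ℝ) ≤ n := n.cast_nonneg
  have hk : (0 : ℝ) ≤ k := k.cast_nonneg
  have h : |wzP (n + 1 : ℕ) k / (2 * (n + 1 : ℕ) + k + 1)|
      ≤ 40 * ((n + 2) ^ 2 * ((k + 1) * (k + 2))) := by
    have hP : 0 ≤ wzP (n + 1 : ℕ) k := by unfold wzP; positivity
    rw [abs_of_nonneg (by positivity), div_le_iff₀ (by positivity)]
    have hP2 : wzP (n + 1 : ℕ) k ≤ 40 * ((n : ℝ) + k + 2) ^ 2 * (n + k + 2) := by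
      unfold wzP
      push_cast
      rw [← sub_nonneg]
      ring_nf
      positivity
    have h2 : (n : ℝ) + k + 2 ≤ (n + 2) * (k + 1) := by nlinarith
    calc _ ≤ _ := hP2
      _ ≤ 40 * ((n + 2) * (k + 1)) ^ 2 * (2 * (n + 1 : ℕ) + k + 1) :=
        mul_le_mul (by gcongr) (by push_cast; linarith) (by positivity) (by positivity)
      _ = 40 * ((n + 2) ^ 2 * ((k + 1) * (k + 1))) * (2 * (n + 1 : ℕ) + k + 1) := by ring
      _ ≤ _ := by
        gcongr
        linarith
  unfold wzG
  rw [abs_mul]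
  calc _ ≤ _ := mul_le_mul h (abs_wzB_succ_le n k) (abs_nonneg _) (by positivity)
    _ = _ := by field_simp

lemma abs_wzF_succ_le (n k : ℕ) :
    |wzF (n + 1) k| ≤ 20 * ((n + 2) ^ 2 * (1 / 3) ^ n) := by
  have hn : (0 : ℝ) ≤ n := n.cast_nonneg
  have hk : (0 : ℝ) ≤ k := k.cast_nonneg
  have h : |(4 * (n + 1 : ℕ) * (4 * (n + 1 : ℕ) + 4 * k + 1) : ℝ)|
      ≤ 20 * ((n + 2) ^ 2 * ((k + 1) * (k + 2))) := by
    rw [abs_of_nonneg (by positivity)]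
    push_cast
    rw [← sub_nonneg]
    ring_nf
    positivity
  unfold wzF
  rw [abs_mul]
  calc _ ≤ _ := mul_le_mul h (abs_wzB_succ_le n k) (abs_nonneg _) (by positivity)
    _ = ncb k * (20 * ((n + 2) ^ 2 * (1 / 3) ^ n)) := by field_simp
    _ ≤ _ := mul_le_of_le_one_left (by positivity) (ncb_le_one k)

/-! ### Guillera's series -/

lemma summable_majorant : Summable fun n : ℕ => ((n : ℝ) + 2) ^ 2 * (1 / 3) ^ n := by
  have h := summable_pow_mul_geometric_of_norm_lt_one (R := ℝ) 2 (r := 1 / 3)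
    (by rw [Real.norm_eq_abs, abs_of_pos] <;> norm_num)
  have h' := ((summable_nat_add_iff 2).2 h).mul_left 9
  refine h'.congr fun n => ?_
  push_cast
  ring

lemma summable_wzG (k : ℕ) : Summable fun n => wzG n k :=
  (summable_nat_add_iff 1).1 <| Summable.of_norm_bounded
    ((summable_majorant.mul_left 40).mul_left (ncb k)) fun n => abs_wzG_succ_le n k

lemma tendsto_wzF (k : ℕ) : Tendsto (fun n => wzF n k) atTop (𝓝 0) := by
  rw [← tendsto_add_atTop_iff_nat 1]
  have h := (summable_majorant.mul_left 20).tendsto_atTop_zero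
  exact squeeze_zero_norm (fun n => abs_wzF_succ_le n k) h

/-- The difference of the two series telescopes in `n`, with `F(0,k) = 0` and `F(N,k) → 0`. -/
lemma tsum_wzG_succ (k : ℕ) : ∑' n, wzG n (k + 1) = ∑' n, wzG n k := by
  have h1 := ((summable_wzG (k + 1)).hasSum.sub (summable_wzG k).hasSum).tendsto_sum_nat
  have h2 : Tendsto (fun N => ∑ n ∈ Finset.range N, (wzG n (k + 1) - wzG n k)) atTop (𝓝 0) := by
    simp_rw [wz, Finset.sum_range_sub (fun n => wzF n k)]
    simpa [wzF] using tendsto_wzF k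
  exact sub_eq_zero.1 (tendsto_nhds_unique h1 h2)

lemma tsum_wzG (k : ℕ) : ∑' n, wzG n k = ∑' n, wzG n 0 := by
  induction k with
  | zero => rfl
  | succ k ih => rw [tsum_wzG_succ, ih]

lemma tendsto_wzG_zero : Tendsto (fun k => wzG 0 k) atTop (𝓝 (8 / Real.pi ^ 2)) := by
  have h1 : Tendsto (fun k : ℕ => (2 : ℝ) - 1 / (k + 1)) atTop (𝓝 (2 - 0)) :=
    tendsto_const_nhds.sub tendsto_one_div_add_atTop_nhds_zero_nat
  have h := (tendsto_ncb_sq_mul.pow 2).mul h1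
  rw [show (2 / Real.pi) ^ 2 * (2 - 0) = 8 / Real.pi ^ 2 by ring] at h
  refine h.congr fun k => ?_
  simp only [wzG, wzB, wzP, rmult_zero_left, ncb_zero, zero_add, pow_zero, Nat.cast_zero]
  field_simp
  ring

/-- Guillera's series. -/
lemma hasSum_guillera : HasSum (fun n => wzG n 0) (8 / Real.pi ^ 2) := by
  have h0 : Tendsto (fun k => ∑' n, wzG (n + 1) k) atTop (𝓝 0) := by
    have hb := tendsto_ncb.mul_const (∑' n : ℕ, 40 * (((n : ℝ) + 2) ^ 2 * (1 / 3) ^ n))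
    rw [zero_mul] at hb
    refine squeeze_zero_norm (fun k => ?_) hb
    exact tsum_of_norm_bounded ((summable_majorant.mul_left 40).hasSum.mul_left (ncb k))
      fun n => abs_wzG_succ_le n k
  have h : Tendsto (fun k => ∑' n, wzG n k) atTop (𝓝 (8 / Real.pi ^ 2 + 0)) := by
    refine (tendsto_wzG_zero.add h0).congr fun k => ?_
    rw [(summable_wzG k).tsum_eq_zero_add]
  simp_rw [tsum_wzG, add_zero] at h
  rw [← tendsto_nhds_unique tendsto_const_nhds h]
  exact (summable_wzG 0).hasSum

/-! ### Telescoping reduction -/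

/-- `(-1)ⁿ C(2n,n)⁵ / 2¹²ⁿ`, the hypergeometric part of the summand. -/
noncomputable def hyp (n : ℕ) : ℝ := (-1 : ℝ) ^ n * (Nat.choose (2 * n) n : ℝ) ^ 5 / 2 ^ (12 * n)

lemma hyp_eq (n : ℕ) : hyp n = (-1) ^ n * ncb n ^ 5 * (1 / 4) ^ n := by
  unfold hyp ncb
  rw [← Nat.centralBinom_eq_two_mul_choose, show (2 : ℝ) ^ (12 * n) = (4 ^ n) ^ 6 by
    rw [← pow_mul, show (4 : ℝ) = 2 ^ 2 by norm_num, ← pow_mul]; congr 1; ring, one_div, inv_pow]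
  field_simp

lemma hyp_succ (n : ℕ) :
    hyp (n + 1) = hyp n * (-(2 * n + 1) ^ 5 / (128 * (n + 1) ^ 5)) := by
  rw [hyp_eq, hyp_eq, ncb_succ, pow_succ, pow_succ (1 / 4 : ℝ)]
  field_simp
  ring

lemma wzG_zero_right (n : ℕ) : wzG n 0 = (20 * n ^ 2 + 8 * n + 1) * hyp n := by
  have hr : rmult n 0 * (ncb n * 4 ^ n) = 1 := by
    unfold ncb
    rw [div_mul_cancel₀ _ (by positivity), rmult_zero_right]
  have hB : wzB n 0 = hyp n := by
    rw [hyp_eq, wzB, ncb_zero, add_zero, one_div, inv_pow, ← div_eq_mul_inv,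
      eq_div_iff (by positivity)]
    linear_combination (-1) ^ n * ncb n ^ 5 * hr
  rw [wzG, hB, wzP, Nat.cast_zero]
  field_simp
  ring

lemma two_mul_sub_one_ne_zero (n : ℕ) : 2 * (n : ℝ) - 1 ≠ 0 := by
  intro h
  have : (2 * n : ℕ) = 1 := by
    have h' : 2 * (n : ℝ) = 1 := by linarith
    exact_mod_cast h'
  omega

/-- The telescoping part of the summand. -/
noncomputable def tele (n : ℕ) : ℝ := -32 * n ^ 5 / (2 * n - 1) * hyp n

lemma summand_eq (n : ℕ) :
    ((20 * (n : ℝ) ^ 2 - 4 * (n : ℝ) - 1) * (n : ℝ) ^ 2 * (2 * (n : ℝ) + 1)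
          / (2 * (n : ℝ) - 1)) * hyp n = tele (n + 1) - tele n - 1 / 4 * wzG n 0 := by
  have h := two_mul_sub_one_ne_zero n
  have h1 : 2 * ((n : ℝ) + 1) - 1 = 2 * n + 1 := by ring
  have h2 : tele (n + 1) = (2 * n + 1) ^ 4 / 4 * hyp n := by
    rw [tele, hyp_succ]
    push_cast
    rw [h1]
    field_simp
    ring
  have h3 : tele n * (2 * n - 1) = -32 * n ^ 5 * hyp n := by
    rw [tele, mul_right_comm, div_mul_cancel₀ _ h]
  rw [wzG_zero_right, h2, div_mul_eq_mul_div, div_eq_iff h]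
  linear_combination h3

lemma summable_tele : Summable tele := by
  have hg := (summable_pow_mul_geometric_of_norm_lt_one (R := ℝ) 5 (r := 1 / 4)
    (by rw [Real.norm_eq_abs, abs_of_pos] <;> norm_num)).mul_left 32
  refine Summable.of_norm_bounded hg fun n => ?_
  have hp := ncb_pos n
  have h5 : ncb n ^ 5 ≤ 1 := pow_le_one₀ hp.le (ncb_le_one n)
  have h1 : 1 ≤ |2 * (n : ℝ) - 1| := by
    rcases Nat.eq_zero_or_pos n with rfl | hn
    · norm_num
    · have : (1 : ℝ) ≤ n := by exact_mod_cast hn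
      exact le_trans (by linarith) (le_abs_self _)
  rw [tele, hyp_eq, Real.norm_eq_abs, abs_mul, abs_div, abs_mul, abs_mul, abs_mul, abs_pow (-1 : ℝ),
    abs_neg, abs_neg, abs_one, one_pow, one_mul, abs_of_nonneg (by positivity : (0 : ℝ) ≤ n ^ 5),
    abs_of_pos (by positivity : 0 < ncb n ^ 5), abs_of_pos (by positivity : (0 : ℝ) < (1 / 4) ^ n),
    abs_of_pos (by norm_num : (0 : ℝ) < 32)]
  calc _ ≤ 32 * (n : ℝ) ^ 5 / 1 * (1 * (1 / 4) ^ n) := by gcongr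
    _ = _ := by ring

theorem neg_two_over_pi_sq :
    ∑' n : ℕ, ((20 * (n : ℝ) ^ 2 - 4 * (n : ℝ) - 1) * (n : ℝ) ^ 2 * (2 * (n : ℝ) + 1)
          / (2 * (n : ℝ) - 1)) *
        ((-1 : ℝ) ^ n * (Nat.choose (2 * n) n : ℝ) ^ 5 / 2 ^ (12 * n)) =
      -2 / Real.pi ^ 2 := by
  have h1 : HasSum (fun n => tele (n + 1)) (∑' n, tele n) := by
    rw [summable_tele.tsum_eq_zero_add, show tele 0 = 0 by simp [tele], zero_add]
    exact ((summable_nat_add_iff 1).2 summable_tele).hasSum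
  have h := (h1.sub summable_tele.hasSum).sub (hasSum_guillera.mul_left (1 / 4))
  simp_rw [← summand_eq] at h
  rw [show -2 / Real.pi ^ 2 = ∑' n, tele n - ∑' n, tele n - 1 / 4 * (8 / Real.pi ^ 2) by ring]
  exact h.tsum_eq
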